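/- Let ρ₀ and ρ₁ be density matrices on ℂⁿ (positive semidefinite with trace 1) and let p₀, p₁ ≥ 0 with p₀ + p₁ = 1. Then the supremum over all binary POVMs (M₀, M₁) (positive semidefinite matrices with M₀ + M₁ = I) of p₀·tr(M₀ρ₀) + p₁·tr(M₁ρ₁) equals ½(1 + ‖p₀ρ₀ − p₁ρ₁‖₁), where for a Hermitian matrix A, ‖A‖₁ denotes the sum of the absolute values of its eigenvalues. -/

import Mathlib

open Matrix ComplexOrder

/-! Because `M₁ = 1 - M₀`, the success probability is `p₁ + tr (M₀ A)` with `A = p₀ρ₀ - p₁ρ₁`,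
where `M₀` ranges over the effects `0 ≤ M₀ ≤ 1`. Conjugation by a unitary permutes the effects and
preserves traces, so `A` may be taken diagonal. Only the diagonal entries of `M₀`, which lie in
`[0, 1]`, then contribute, and the best choice is the indicator of the nonnegative eigenvalues. The
maximum of `tr (M₀ A)` is thus the sum of the positive parts of the eigenvalues, which is
`(tr A + ‖A‖₁) / 2`. -/

open RCLike (re ofReal re_monotone)
open Set (Icc image_image)
open scoped MatrixOrder

theorem mul_le_posPart_of_mem_Icc {R : Type*} [Ring R] [Lattice R] [IsOrderedRing R] {t : R}
    (ht : t ∈ Icc 0 1) (x : R) : t * x ≤ x⁺ :=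
  calc t * x ≤ t * x⁺ := mul_le_mul_of_nonneg_left (le_posPart x) ht.1
    _ ≤ x⁺ := mul_le_of_le_one_left (posPart_nonneg x) ht.2

theorem trace_conjStarAlgAut {R ι : Type*} [CommRing R] [StarRing R] [Fintype ι] [DecidableEq ι]
    (U : unitary (Matrix ι ι R)) (M : Matrix ι ι R) :
    (Unitary.conjStarAlgAut R _ U M).trace = M.trace := by
  rw [Unitary.conjStarAlgAut_apply, trace_mul_cycle, Unitary.coe_star_mul_self, one_mul]

section LoewnerOrder

variable {𝕜 ι : Type*} [RCLike 𝕜]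

theorem diag_mono {M N : Matrix ι ι 𝕜} (h : M ≤ N) : M.diag ≤ N.diag :=
  fun _ ↦ sub_nonneg.mp (le_iff.mp h).diag_nonneg

theorem diagonal_mono [DecidableEq ι] {c d : ι → 𝕜} (h : c ≤ d) : diagonal c ≤ diagonal d := by
  rw [le_iff, diagonal_sub]
  exact PosSemidef.diagonal (sub_nonneg.mpr h)

theorem re_apply_self_mem_Icc [DecidableEq ι] {M : Matrix ι ι 𝕜} (hM : M ∈ Icc 0 1) (i : ι) :
    re (M i i) ∈ Icc (0 : ℝ) 1 := by
  have h₀ := re_monotone (diag_mono hM.1 i)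
  have h₁ := re_monotone (diag_mono hM.2 i)
  simp only [diag_apply, Matrix.zero_apply, one_apply_eq, map_zero, RCLike.one_re] at h₀ h₁
  exact ⟨h₀, h₁⟩

end LoewnerOrder

section Effects

variable {𝕜 ι : Type*} [RCLike 𝕜] [Fintype ι] [DecidableEq ι]

theorem re_trace_mul_diagonal (M : Matrix ι ι 𝕜) (d : ι → ℝ) :
    re (M * diagonal (ofReal ∘ d)).trace = ∑ i, re (M i i) * d i := by
  simp [trace, mul_diagonal]

theorem isGreatest_re_trace_mul_diagonal (d : ι → ℝ) :
    IsGreatest ((fun M : Matrix ι ι 𝕜 ↦ re (M * diagonal (ofReal ∘ d)).trace) '' Icc 0 1)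
      (∑ i, (d i)⁺) := by
  constructor
  · let c : ι → 𝕜 := fun i ↦ if 0 ≤ d i then 1 else 0
    have c_nonneg : 0 ≤ c := fun i ↦ by simp only [c]; split_ifs <;> simp
    have c_le_one : c ≤ 1 := fun i ↦ by simp only [c]; split_ifs <;> simp
    refine ⟨diagonal c, ⟨?_, ?_⟩, ?_⟩
    · simpa using diagonal_mono c_nonneg
    · simpa using diagonal_mono c_le_one
    · simp [c, posPart_eq_ite, apply_ite]
  · rintro _ ⟨M, hM, rfl⟩
    simp only [re_trace_mul_diagonal]
    exact Finset.sum_le_sum fun i _ ↦ mul_le_posPart_of_mem_Icc (re_apply_self_mem_Icc hM i) (d i)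

theorem image_conjStarAlgAut_Icc (U : unitary (Matrix ι ι 𝕜)) :
    Unitary.conjStarAlgAut 𝕜 _ U '' Icc 0 1 = Icc 0 1 := by
  let φ := Unitary.conjStarAlgAut 𝕜 (Matrix ι ι 𝕜) U
  have image_eq : φ '' Icc 0 1 = Icc (φ 0) (φ 1) := (OrderIsoClass.toOrderIso φ).image_Icc 0 1
  rwa [map_zero, map_one] at image_eq

theorem image_re_trace_mul_conjStarAlgAut (U : unitary (Matrix ι ι 𝕜)) (A : Matrix ι ι 𝕜) :
    (fun M : Matrix ι ι 𝕜 ↦ re (M * Unitary.conjStarAlgAut 𝕜 _ U A).trace) '' Icc 0 1 =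
      (fun M ↦ re (M * A).trace) '' Icc 0 1 := by
  let φ := Unitary.conjStarAlgAut 𝕜 (Matrix ι ι 𝕜) U
  have image_φ : φ '' Icc 0 1 = Icc 0 1 := image_conjStarAlgAut_Icc U
  calc (fun M : Matrix ι ι 𝕜 ↦ re (M * φ A).trace) '' Icc 0 1
      = (fun M : Matrix ι ι 𝕜 ↦ re (φ M * φ A).trace) '' Icc 0 1 := by
        rw [← image_φ, image_image, image_φ]
    _ = (fun M : Matrix ι ι 𝕜 ↦ re (M * A).trace) '' Icc 0 1 := by
        simp only [← map_mul, φ, trace_conjStarAlgAut]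

theorem isGreatest_re_trace_mul {A : Matrix ι ι 𝕜} (hA : A.IsHermitian) :
    IsGreatest ((fun M ↦ re (M * A).trace) '' Icc 0 1) (∑ i, (hA.eigenvalues i)⁺) := by
  have h := isGreatest_re_trace_mul_diagonal (𝕜 := 𝕜) hA.eigenvalues
  rwa [← image_re_trace_mul_conjStarAlgAut hA.eigenvectorUnitary, ← hA.spectral_theorem] at h

theorem sum_posPart_eigenvalues {A : Matrix ι ι 𝕜} (hA : A.IsHermitian) :
    ∑ i, (hA.eigenvalues i)⁺ = (re A.trace + ∑ i, |hA.eigenvalues i|) / 2 := by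
  have trace_eq : re A.trace = ∑ i, hA.eigenvalues i := by
    simp [hA.trace_eq_sum_eigenvalues]
  rw [trace_eq, ← Finset.sum_add_distrib]
  simp only [add_abs_eq_two_nsmul_posPart, two_nsmul, Finset.sum_add_distrib, add_self_div_two]

/-- The values `tr (M₀ A₀) + tr (M₁ A₁)` attained by binary POVMs `(M₀, M₁)`. For `Aₓ = pₓ ρₓ` they
are the success probabilities of guessing `x` from `ρₓ`. The real part turns the trace into a real
number for arbitrary `A₀` and `A₁`. -/
def binaryPOVMPayoffs (A₀ A₁ : Matrix ι ι 𝕜) : Set ℝ :=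
  {g | ∃ M₀ M₁ : Matrix ι ι 𝕜, M₀.PosSemidef ∧ M₁.PosSemidef ∧ M₀ + M₁ = 1 ∧
    g = re (M₀ * A₀).trace + re (M₁ * A₁).trace}

theorem binaryPOVMPayoffs_eq_image (A₀ A₁ : Matrix ι ι 𝕜) :
    binaryPOVMPayoffs A₀ A₁ =
      (re A₁.trace + ·) '' ((fun M ↦ re (M * (A₀ - A₁)).trace) '' Icc 0 1) := by
  have payoff (M : Matrix ι ι 𝕜) : re (M * A₀).trace + re ((1 - M) * A₁).trace =
      re A₁.trace + re (M * (A₀ - A₁)).trace := by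
    simp only [mul_sub, sub_mul, one_mul, trace_sub, map_sub]
    ring
  ext g
  rw [image_image]
  constructor
  · rintro ⟨M₀, M₁, h₀, h₁, hsum, rfl⟩
    obtain rfl := eq_sub_of_add_eq' hsum
    exact ⟨M₀, ⟨h₀.nonneg, le_iff.mpr h₁⟩, (payoff M₀).symm⟩
  · rintro ⟨M, ⟨hM₀, hM₁⟩, rfl⟩
    exact ⟨M, 1 - M, nonneg_iff_posSemidef.mp hM₀, le_iff.mp hM₁, add_sub_cancel M 1,
      (payoff M).symm⟩

theorem stmt1_general {A₀ A₁ : Matrix ι ι 𝕜} (hA : (A₀ - A₁).IsHermitian) :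
    IsGreatest (binaryPOVMPayoffs A₀ A₁)
      ((re (A₀ + A₁).trace + ∑ i, |hA.eigenvalues i|) / 2) := by
  have value : (re (A₀ + A₁).trace + ∑ i, |hA.eigenvalues i|) / 2 =
      re A₁.trace + ∑ i, (hA.eigenvalues i)⁺ := by
    rw [sum_posPart_eigenvalues, trace_add, trace_sub, map_add, map_sub]
    ring
  rw [binaryPOVMPayoffs_eq_image, value]
  exact (add_right_mono (a := re A₁.trace)).map_isGreatest (isGreatest_re_trace_mul hA)

end Effects

/-- **Helstrom bound.** The optimal success probability for discriminating two
density matrices `ρ₀, ρ₁` with priors `p₀, p₁` by a binary POVM equals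
`(1 + ‖p₀ρ₀ - p₁ρ₁‖₁)/2`, where the trace norm is the sum of the absolute
values of the eigenvalues of the Hermitian matrix `p₀ρ₀ - p₁ρ₁`. -/
theorem stmt1 {n : ℕ} (ρ₀ ρ₁ : Matrix (Fin n) (Fin n) ℂ)
    (hρ₀ : ρ₀.PosSemidef) (hρ₁ : ρ₁.PosSemidef)
    (htr₀ : ρ₀.trace = 1) (htr₁ : ρ₁.trace = 1)
    (p₀ p₁ : ℝ) (hp₀ : 0 ≤ p₀) (hp₁ : 0 ≤ p₁) (hp : p₀ + p₁ = 1)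
    (hA : ((p₀ : ℂ) • ρ₀ - (p₁ : ℂ) • ρ₁).IsHermitian) :
    sSup {g : ℝ | ∃ M₀ M₁ : Matrix (Fin n) (Fin n) ℂ,
        M₀.PosSemidef ∧ M₁.PosSemidef ∧ M₀ + M₁ = 1 ∧
        g = p₀ * ((M₀ * ρ₀).trace).re + p₁ * ((M₁ * ρ₁).trace).re} =
      (1 + ∑ i, |hA.eigenvalues i|) / 2 := by
  simpa [htr₀, htr₁, hp, binaryPOVMPayoffs] using (stmt1_general hA).csSup_eq
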